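/- arXiv:2411.03158 — 3 statements merged into one kernel-verified Lean document; each statement's English description precedes it below -/
import Mathlib

section
/- Let H ⊆ V be a k-dimensional subspace, and set r = k − dim(H ∩ H^⊥). Then there exist subspaces M₁, M₂, M₃, M₄ ⊆ V such that V = M₁ ⊕ M₂ ⊕ M₃ ⊕ M₄ (internal direct sum), dim M₁ = k − r, dim M₂ = r, dim M₃ = n − 2k + r, dim M₄ = k − r, H ∩ H^⊥ = M₁, H = M₁ ⊕ M₂, H^⊥ = M₁ ⊕ M₃, and moreover the restriction of ⟨−,−⟩ to M₂ is nondegenerate, the restriction of ⟨−,−⟩ to M₃ is nondegenerate, the pairing M₁ × M₄ → ℂ given by ⟨−,−⟩ is perfect (nondegenerate in each variable), and ⟨Mᵢ, Mⱼ⟩ = 0 for every pair (i,j) other than (1,4), (4,1), (2,2), (3,3). -/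
/-!
Put `R = H ∩ H^⊥` and choose complements `E` of `R` in `H` and `F` of `R` in `H^⊥`. Then `E ⊔ F` is
a complement of `R` in `R^⊥ = H ⊔ H^⊥`, hence nondegenerate, and `R` is Lagrangian in
`W = (E ⊔ F)^⊥`. A Lagrangian `R` has a Lagrangian complement in `W`: the involution `C ↦ C^⊥` of
the complements of `R` is the affine map `p ↦ 1 - p*` on the projections `p` onto `R`, and the
kernel of the midpoint of the projections along `C` and `C^⊥` is fixed by it, that is, Lagrangian.

Since `R`, `E`, `F` and this complement span the whole space, the nondegeneracy of the pairings, and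
then the independence of the four subspaces, follow from their orthogonality relations alone.
-/

open Module

/-- Left orthogonal complement `H^⊥ = {v | ⟨v,w⟩ = 0 for all w ∈ H}` of a subspace with
respect to a bilinear form. -/
def bperp {V : Type*} [AddCommGroup V] [Module ℂ V]
    (B : V →ₗ[ℂ] V →ₗ[ℂ] ℂ) (H : Submodule ℂ V) : Submodule ℂ V where
  carrier := {v | ∀ w ∈ H, B v w = 0}
  add_mem' := by
    intro a b ha hb w hw
    rw [map_add, LinearMap.add_apply, ha w hw, hb w hw, add_zero]
  zero_mem' := by
    intro w hw
    simp
  smul_mem' := by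
    intro c a ha w hw
    rw [map_smul, LinearMap.smul_apply, ha w hw, smul_zero]

section PairedBy

variable {ι R V : Type*} [CommRing R] [AddCommGroup V] [Module R V]

/-- The family `M` is orthogonal with respect to `B` except that `M i` may pair nontrivially with
`M (σ i)`. A hyperbolic pair of isotropic subspaces corresponds to a transposition in `σ`, a
subspace orthogonal to all the others to a fixed point. -/
def PairedBy (B : LinearMap.BilinForm R V) (σ : Equiv.Perm ι) (M : ι → Submodule R V) : Prop :=
  ∀ i j, j ≠ σ i → M j ≤ B.orthogonal (M i)

variable {B : LinearMap.BilinForm R V} {σ : Equiv.Perm ι} {M : ι → Submodule R V}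

namespace PairedBy

theorem eq_zero_of_forall_apply_eq_zero (hM : PairedBy B σ M) (hB : B.SeparatingLeft)
    (hspan : ⨆ i, M i = ⊤) {i : ι} {v : V} (hv : v ∈ M i) (h : ∀ w ∈ M (σ i), B v w = 0) :
    v = 0 := by
  have hker : ⨆ j, M j ≤ LinearMap.ker (B v) := by
    refine iSup_le fun j w hw => ?_
    obtain rfl | hj := eq_or_ne j (σ i)
    · exact h w hw
    · exact hM i j hj hw v hv
  exact hB v fun w => hker (hspan ▸ Submodule.mem_top)

theorem iSupIndep (hM : PairedBy B σ M) (hB : B.SeparatingLeft) (hspan : ⨆ i, M i = ⊤) :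
    iSupIndep M := by
  refine iSupIndep_def.2 fun i => Submodule.disjoint_def.2 fun v hv hv' => ?_
  refine hM.eq_zero_of_forall_apply_eq_zero hB hspan hv fun w hw => ?_
  have hker : ⨆ j, ⨆ _ : j ≠ i, M j ≤ LinearMap.ker (B.flip w) :=
    iSup₂_le fun j hj u hu => hM j (σ i) (σ.injective.ne hj.symm) hw u hu
  exact hker hv'

theorem isInternal [DecidableEq ι] (hM : PairedBy B σ M) (hB : B.SeparatingLeft)
    (hspan : ⨆ i, M i = ⊤) : DirectSum.IsInternal M :=
  DirectSum.isInternal_submodule_of_iSupIndep_of_iSup_eq_top (hM.iSupIndep hB hspan) hspan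

end PairedBy

theorem pairedBy_of_forall_le [LinearOrder ι] (hrefl : B.IsRefl) (hσ : Function.Involutive σ)
    (h : ∀ i j, i ≤ j → j ≠ σ i → M j ≤ B.orthogonal (M i)) : PairedBy B σ M := by
  intro i j hij
  obtain hle | hle := le_total i j
  · exact h i j hle hij
  · have hji : i ≠ σ j := fun hi => hij (by rw [hi, hσ j])
    exact fun w hw v hv => hrefl w v (h j i hle hji hv w hw)

theorem pairedBy_swap_fin_four (hrefl : B.IsRefl) {M₀ M₁ M₂ M₃ : Submodule R V}
    (h₀ : M₀ ⊔ (M₁ ⊔ M₂) ≤ B.orthogonal M₀) (h₁ : M₂ ≤ B.orthogonal M₁)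
    (h₃ : M₃ ≤ B.orthogonal (M₁ ⊔ M₂ ⊔ M₃)) :
    PairedBy B (Equiv.swap 0 3) ![M₀, M₁, M₂, M₃] := by
  have h₃' {N : Submodule R V} (hN : N ≤ M₁ ⊔ M₂ ⊔ M₃) : M₃ ≤ B.orthogonal N :=
    h₃.trans (B.orthogonal_le hN)
  simp only [sup_le_iff] at h₀
  refine pairedBy_of_forall_le hrefl (Equiv.swap_apply_self 0 3) fun i j hle hij => ?_
  match i, j with
  | 0, 0 => exact h₀.1
  | 0, 1 => exact h₀.2.1
  | 0, 2 => exact h₀.2.2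
  | 1, 2 => exact h₁
  | 1, 3 => exact h₃' (le_sup_left.trans le_sup_left)
  | 2, 3 => exact h₃' (le_sup_right.trans le_sup_left)
  | 3, 3 => exact h₃' le_sup_right
  | 0, 3 | 1, 1 | 2, 2 => exact absurd (by decide) hij
  | 1, 0 | 2, 0 | 2, 1 | 3, 0 | 3, 1 | 3, 2 => exact absurd hle (by decide)

end PairedBy

section CommRing

variable {R V : Type*} [CommRing R] [AddCommGroup V] [Module R V] {B : LinearMap.BilinForm R V}

theorem orthogonal_sup (U W : Submodule R V) :
    B.orthogonal (U ⊔ W) = B.orthogonal U ⊓ B.orthogonal W := by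
  refine le_antisymm (le_inf (B.orthogonal_le le_sup_left) (B.orthogonal_le le_sup_right)) ?_
  rintro v ⟨hU, hW⟩
  have hker : U ⊔ W ≤ LinearMap.ker (B.flip v) := sup_le hU hW
  exact hker

theorem apply_projection_add_apply_projection {U C D : Submodule R V} (hU : U ≤ B.orthogonal U)
    (hCD : D ≤ B.orthogonal C) (hC : IsCompl U C) (hD : IsCompl U D) (v w : V) :
    B (U.projection C hC v) w + B v (U.projection D hD w) = B v w := by
  have h₁ : B (U.projection C hC v) (U.projection D hD w) = 0 :=
    hU (U.projection_apply_mem hD w) _ (U.projection_apply_mem hC v)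
  have h₂ : B (v - U.projection C hC v) (w - U.projection D hD w) = 0 :=
    hCD (Submodule.sub_projection_mem hD w) _ (Submodule.sub_projection_mem hC v)
  simp only [map_sub, LinearMap.sub_apply] at h₂
  linear_combination h₁ - h₂

theorem isRefl_of_symm_or_skew (h : (∀ v w, B v w = B w v) ∨ (∀ v w, B v w = -B w v)) :
    B.IsRefl := by
  intro v w hvw
  obtain h | h := h
  · rw [h, hvw]
  · rw [h, hvw, neg_zero]

end CommRing

section Field

variable {K V : Type*} [Field K] [AddCommGroup V] [Module K V] [FiniteDimensional K V]
  {B : LinearMap.BilinForm K V}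

theorem orthogonal_inf (hB : B.Nondegenerate) (hrefl : B.IsRefl) (U W : Submodule K V) :
    B.orthogonal (U ⊓ W) = B.orthogonal U ⊔ B.orthogonal W := by
  have h := congrArg B.orthogonal (orthogonal_sup (B := B) (B.orthogonal U) (B.orthogonal W))
  simpa only [LinearMap.BilinForm.orthogonal_orthogonal hB hrefl] using h.symm

theorem isCompl_orthogonal_orthogonal (hB : B.Nondegenerate) (hrefl : B.IsRefl)
    {U W : Submodule K V} (h : IsCompl U W) : IsCompl (B.orthogonal U) (B.orthogonal W) := by
  refine IsCompl.of_eq ?_ ?_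
  · rw [← orthogonal_sup, h.sup_eq_top, LinearMap.BilinForm.orthogonal_top_eq_bot hB]
  · rw [← orthogonal_inf hB hrefl, h.inf_eq_bot, LinearMap.BilinForm.orthogonal_bot]

theorem isCompl_orthogonal_of_sup_eq_orthogonal (hB : B.Nondegenerate) (hrefl : B.IsRefl)
    {R D : Submodule K V} (hdisj : Disjoint R D) (hsup : R ⊔ D = B.orthogonal R) :
    IsCompl D (B.orthogonal D) := by
  rw [LinearMap.BilinForm.isCompl_orthogonal_iff_disjoint hrefl, disjoint_iff_inf_le]
  calc D ⊓ B.orthogonal D ≤ D ⊓ (B.orthogonal R ⊓ B.orthogonal D) :=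
        le_inf inf_le_left (inf_le_inf_right _ (hsup ▸ le_sup_right))
    _ = D ⊓ R := by
        rw [← orthogonal_sup, hsup, LinearMap.BilinForm.orthogonal_orthogonal hB hrefl]
    _ ≤ ⊥ := hdisj.symm.le_bot

variable [NeZero (2 : K)]

theorem exists_isotropic_isCompl_of_orthogonal_eq_self (hB : B.Nondegenerate) (hrefl : B.IsRefl)
    {R : Submodule K V} (hR : B.orthogonal R = R) :
    ∃ L : Submodule K V, IsCompl R L ∧ L ≤ B.orthogonal L := by
  obtain ⟨C, hC⟩ := R.exists_isCompl
  have hC' : IsCompl R (B.orthogonal C) := hR ▸ isCompl_orthogonal_orthogonal hB hrefl hC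
  let p := R.projection C hC
  let p' := R.projection (B.orthogonal C) hC'
  have hmid : LinearMap.IsProj R ((2⁻¹ : K) • (p + p')) := by
    refine ⟨fun v => R.smul_mem _ (R.add_mem (R.projection_apply_mem hC v)
      (R.projection_apply_mem hC' v)), fun v hv => ?_⟩
    have hp : p v = v := Submodule.projection_apply_of_mem_left hC hv
    have hp' : p' v = v := Submodule.projection_apply_of_mem_left hC' hv
    rw [LinearMap.smul_apply, LinearMap.add_apply, hp, hp', ← two_smul K v,
      inv_smul_smul₀ two_ne_zero]
  refine ⟨_, hmid.isCompl, fun w hw v hv => ?_⟩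
  have hker : ∀ u ∈ LinearMap.ker ((2⁻¹ : K) • (p + p')), p u + p' u = 0 := fun u hu =>
    (smul_eq_zero_iff_right (inv_ne_zero two_ne_zero)).1 hu
  have hadj : B (p v) w + B v (p' w) = B v w :=
    apply_projection_add_apply_projection hR.ge le_rfl hC hC' v w
  have hadj' : B (p' v) w + B v (p w) = B v w :=
    apply_projection_add_apply_projection hR.ge
      (LinearMap.BilinForm.le_orthogonal_orthogonal hrefl) hC' hC v w
  have htwo : 2 * B v w = B (p v + p' v) w + B v (p w + p' w) := by
    simp only [map_add, LinearMap.add_apply]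
    linear_combination -hadj - hadj'
  rw [hker v hv, hker w hw, map_zero, map_zero, LinearMap.zero_apply, add_zero] at htwo
  exact (mul_eq_zero_iff_left two_ne_zero).1 htwo

theorem exists_isotropic_compl_of_inf_orthogonal_eq_self (hrefl : B.IsRefl)
    {R W : Submodule K V} (hW : (B.restrict W).Nondegenerate) (hR : W ⊓ B.orthogonal R = R) :
    ∃ L : Submodule K V, Disjoint R L ∧ R ⊔ L = W ∧ L ≤ B.orthogonal L := by
  have hRW : R ≤ W := hR ▸ inf_le_left
  have hlag : (B.restrict W).orthogonal (R.submoduleOf W) = R.submoduleOf W := by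
    ext w
    have hw : (w : V) ∈ R ↔ (w : V) ∈ B.orthogonal R := by
      conv_lhs => rw [← hR]
      exact and_iff_right w.2
    change (∀ v ∈ R.submoduleOf W, B v w = 0) ↔ (w : V) ∈ R
    rw [hw]
    exact ⟨fun h v hv => h ⟨v, hRW hv⟩ hv, fun h v hv => h v hv⟩
  have hreflW : (B.restrict W).IsRefl := fun v w h => hrefl v w h
  obtain ⟨L, hcompl, hL⟩ := exists_isotropic_isCompl_of_orthogonal_eq_self hW hreflW hlag
  have hmap : (R.submoduleOf W).map W.subtype = R := by
    rw [Submodule.submoduleOf, Submodule.map_comap_subtype, inf_eq_right.2 hRW]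
  refine ⟨L.map W.subtype, ?_, ?_, ?_⟩
  · rw [← hmap]
    exact Submodule.disjoint_map W.injective_subtype hcompl.disjoint
  · rw [← hmap, ← Submodule.map_sup, hcompl.sup_eq_top, Submodule.map_subtype_top]
  · rintro _ ⟨w, hw, rfl⟩ _ ⟨v, hv, rfl⟩
    exact hL hw v hv

theorem exists_isotropic_isCompl_orthogonal (hB : B.Nondegenerate) (hrefl : B.IsRefl)
    {R D : Submodule K V} (hdisj : Disjoint R D) (hsup : R ⊔ D = B.orthogonal R) :
    ∃ L : Submodule K V, IsCompl (B.orthogonal R) L ∧ L ≤ B.orthogonal (D ⊔ L) := by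
  have hD := isCompl_orthogonal_of_sup_eq_orthogonal hB hrefl hdisj hsup
  have hW : (B.restrict (B.orthogonal D)).Nondegenerate := by
    rw [LinearMap.BilinForm.restrict_nondegenerate_iff_isCompl_orthogonal hrefl,
      LinearMap.BilinForm.orthogonal_orthogonal hB hrefl]
    exact hD.symm
  have hR : B.orthogonal D ⊓ B.orthogonal R = R := by
    rw [← orthogonal_sup, sup_comm, hsup, LinearMap.BilinForm.orthogonal_orthogonal hB hrefl]
  obtain ⟨L, hRL, hRLsup, hL⟩ := exists_isotropic_compl_of_inf_orthogonal_eq_self hrefl hW hR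
  refine ⟨L, ?_, orthogonal_sup D L ▸ le_inf (hRLsup ▸ le_sup_right) hL⟩
  rw [← hRLsup] at hD
  rw [← hsup, sup_comm]
  exact hRL.isCompl_sup_left_of_isCompl_sup_right hD

theorem exists_pairedBy_swap (hB : B.Nondegenerate) (hrefl : B.IsRefl) (H : Submodule K V) :
    ∃ M : Fin 4 → Submodule K V, PairedBy B (Equiv.swap 0 3) M ∧ ⨆ i, M i = ⊤ ∧
      H ⊓ B.orthogonal H = M 0 ∧ H = M 0 ⊔ M 1 ∧ B.orthogonal H = M 0 ⊔ M 2 := by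
  set R := H ⊓ B.orthogonal H with hR
  obtain ⟨E, hRE, hE⟩ := IsModularLattice.exists_disjoint_and_sup_eq (inf_le_left : R ≤ H)
  obtain ⟨F, hRF, hF⟩ :=
    IsModularLattice.exists_disjoint_and_sup_eq (inf_le_right : R ≤ B.orthogonal H)
  have hFH : F ≤ B.orthogonal H := hF ▸ le_sup_right
  have hHF : Disjoint H F := by
    rw [disjoint_iff_inf_le]
    exact (le_inf (inf_le_inf_left H hFH) inf_le_right).trans hRF.le_bot
  have hdisj : Disjoint R (E ⊔ F) := hRE.disjoint_sup_right_of_disjoint_sup_left (by rwa [hE])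
  have hsup : R ⊔ (E ⊔ F) = B.orthogonal R := by
    rw [sup_sup_distrib_left, hE, hF, hR, orthogonal_inf hB hrefl,
      LinearMap.BilinForm.orthogonal_orthogonal hB hrefl, sup_comm]
  obtain ⟨L, hcompl, hL⟩ := exists_isotropic_isCompl_orthogonal hB hrefl hdisj hsup
  have hFE : F ≤ B.orthogonal E := hFH.trans (B.orthogonal_le (hE ▸ le_sup_right))
  let M := ![R, E, F, L]
  refine ⟨M, pairedBy_swap_fin_four hrefl hsup.le hFE hL, ?_, rfl, hE.symm, hF.symm⟩
  rw [eq_top_iff, ← hcompl.sup_eq_top, ← hsup]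
  exact sup_le (sup_le (le_iSup M 0) (sup_le (le_iSup M 1) (le_iSup M 2))) (le_iSup M 3)

end Field

theorem finrank_sup_eq_add_of_disjoint {K V : Type*} [DivisionRing K] [AddCommGroup V] [Module K V]
    {U W : Submodule K V} [FiniteDimensional K U] [FiniteDimensional K W] (h : Disjoint U W) :
    finrank K ↥(U ⊔ W) = finrank K U + finrank K W := by
  rw [← Submodule.finrank_sup_add_finrank_inf_eq, h.eq_bot, finrank_bot, add_zero]

theorem sum_finrank_eq_of_isInternal {ι K V : Type*} [DecidableEq ι] [Fintype ι] [DivisionRing K]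
    [AddCommGroup V] [Module K V] [FiniteDimensional K V] {M : ι → Submodule K V}
    (hM : DirectSum.IsInternal M) : ∑ i, finrank K (M i) = finrank K V := by
  rw [← finrank_directSum]
  exact (LinearEquiv.ofBijective (DirectSum.coeLinearMap M) hM).finrank_eq

theorem stmt_0_general {K V : Type*} [Field K] [NeZero (2 : K)] [AddCommGroup V] [Module K V]
    [FiniteDimensional K V] (n : ℕ) (hn : finrank K V = n) (B : LinearMap.BilinForm K V)
    (hB : B.SeparatingLeft) (hrefl : B.IsRefl)
    (H : Submodule K V) (k : ℕ) (hk : finrank K H = k)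
    (r : ℕ) (hr : r = k - finrank K ↥(H ⊓ B.orthogonal H)) :
    ∃ M : Fin 4 → Submodule K V,
      DirectSum.IsInternal M ∧
      finrank K ↥(M 0) = k - r ∧
      finrank K ↥(M 1) = r ∧
      (finrank K ↥(M 2) : ℤ) = (n : ℤ) - 2 * k + r ∧
      finrank K ↥(M 3) = k - r ∧
      H ⊓ B.orthogonal H = M 0 ∧
      H = M 0 ⊔ M 1 ∧
      B.orthogonal H = M 0 ⊔ M 2 ∧
      (∀ v ∈ M 1, (∀ w ∈ M 1, B v w = 0) → v = 0) ∧
      (∀ v ∈ M 2, (∀ w ∈ M 2, B v w = 0) → v = 0) ∧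
      (∀ v ∈ M 0, (∀ w ∈ M 3, B v w = 0) → v = 0) ∧
      (∀ w ∈ M 3, (∀ v ∈ M 0, B v w = 0) → w = 0) ∧
      (∀ i j : Fin 4, (i, j) ∉ ({(0, 3), (3, 0), (1, 1), (2, 2)} : Set (Fin 4 × Fin 4)) →
        ∀ v ∈ M i, ∀ w ∈ M j, B v w = 0) := by
  have hB' : B.Nondegenerate := hrefl.nondegenerate_iff_separatingLeft.2 hB
  obtain ⟨M, hM, hspan, h₀, h₁, h₂⟩ := exists_pairedBy_swap hB' hrefl H
  have hint := hM.isInternal hB hspan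
  have hnondeg (i : Fin 4) (v : V) (hv : v ∈ M i) (h : ∀ w ∈ M (Equiv.swap 0 3 i), B v w = 0) :
      v = 0 := hM.eq_zero_of_forall_apply_eq_zero hB hspan hv h
  have hdim : finrank K (M 0) + finrank K (M 1) + finrank K (M 2) + finrank K (M 3) = n := by
    rw [← hn, ← sum_finrank_eq_of_isInternal hint, Fin.sum_univ_four]
  have hdisj (i : Fin 4) (hi : i ≠ 0) : Disjoint (M 0) (M i) :=
    hint.submodule_iSupIndep.pairwiseDisjoint hi.symm
  have hdimH : finrank K (M 0) + finrank K (M 1) = k := by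
    rw [← finrank_sup_eq_add_of_disjoint (hdisj 1 (by decide)), ← h₁, hk]
  have hdimH' : finrank K (M 0) + finrank K (M 2) = n - k := by
    rw [← finrank_sup_eq_add_of_disjoint (hdisj 2 (by decide)), ← h₂,
      LinearMap.BilinForm.finrank_orthogonal hB', hn, hk]
  have hkn : k ≤ n := hk ▸ hn ▸ H.finrank_le
  rw [h₀] at hr
  have hswap (i : Fin 4) : (i, Equiv.swap 0 3 i) ∈
      ({(0, 3), (3, 0), (1, 1), (2, 2)} : Set (Fin 4 × Fin 4)) := by
    fin_cases i <;> simp [Equiv.swap_apply_def]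
  exact ⟨M, hint, by omega, by omega, by omega, by omega, h₀, h₁, h₂, hnondeg 1, hnondeg 2,
    hnondeg 0, fun w hw h => hnondeg 3 w hw fun v hv => hrefl _ _ (h v hv),
    fun i j hij v hv _ hw => hM i j (fun h => hij (h ▸ hswap i)) hw v hv⟩

theorem bperp_eq_orthogonal {V : Type*} [AddCommGroup V] [Module ℂ V]
    {B : LinearMap.BilinForm ℂ V} (hrefl : B.IsRefl) (H : Submodule ℂ V) :
    bperp B H = B.orthogonal H :=
  Submodule.ext fun _ => forall₂_congr fun _ _ => LinearMap.BilinForm.IsRefl.eq_iff hrefl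

/-- Lemma 3.1 (`lem:v4-decomp`): for a `k`-dimensional subspace `H` of a space `V` with a
nondegenerate symmetric or skew-symmetric bilinear form, with `r = k - dim (H ∩ H^⊥)`, there
is a decomposition `V = M₁ ⊕ M₂ ⊕ M₃ ⊕ M₄` adapted to `H` with the indicated dimensions and
pairing properties (here indices `0,1,2,3` correspond to `1,2,3,4`). -/
theorem stmt_0 {V : Type*} [AddCommGroup V] [Module ℂ V] [FiniteDimensional ℂ V]
    (n : ℕ) (hn : finrank ℂ V = n)
    (B : V →ₗ[ℂ] V →ₗ[ℂ] ℂ)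
    (hB : ∀ v, (∀ w, B v w = 0) → v = 0)
    (hrefl : (∀ v w, B v w = B w v) ∨ (∀ v w, B v w = - B w v))
    (H : Submodule ℂ V) (k : ℕ) (hk : finrank ℂ H = k)
    (r : ℕ) (hr : r = k - finrank ℂ ↥(H ⊓ bperp B H)) :
    ∃ M : Fin 4 → Submodule ℂ V,
      DirectSum.IsInternal M ∧
      finrank ℂ ↥(M 0) = k - r ∧
      finrank ℂ ↥(M 1) = r ∧
      (finrank ℂ ↥(M 2) : ℤ) = (n : ℤ) - 2 * k + r ∧
      finrank ℂ ↥(M 3) = k - r ∧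
      H ⊓ bperp B H = M 0 ∧
      H = M 0 ⊔ M 1 ∧
      bperp B H = M 0 ⊔ M 2 ∧
      (∀ v ∈ M 1, (∀ w ∈ M 1, B v w = 0) → v = 0) ∧
      (∀ v ∈ M 2, (∀ w ∈ M 2, B v w = 0) → v = 0) ∧
      (∀ v ∈ M 0, (∀ w ∈ M 3, B v w = 0) → v = 0) ∧
      (∀ w ∈ M 3, (∀ v ∈ M 0, B v w = 0) → w = 0) ∧
      (∀ i j : Fin 4, (i, j) ∉ ({(0, 3), (3, 0), (1, 1), (2, 2)} : Set (Fin 4 × Fin 4)) →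
        ∀ v ∈ M i, ∀ w ∈ M j, B v w = 0) := by
  have hB' : LinearMap.BilinForm.IsRefl B := isRefl_of_symm_or_skew hrefl
  rw [bperp_eq_orthogonal hB'] at hr ⊢
  exact stmt_0_general n hn B hB hB' H k hk r hr
end

section
/- Assume the form ⟨−,−⟩ is skew-symmetric (and nondegenerate), and let H ⊆ V be any subspace. Then the stabilizer of H in the symplectic group, namely the set S = {g ∈ End(V) : g is an isometry of V and g(H) = H}, is a connected subset of End(V). -/
open Module

/-!
Elements of the stabilizer are joined to `1` along curves parametrized by the complement of a
finite subset of `ℂ`.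

If `g + 1` is invertible, then `g = (1 + a) (1 - a)⁻¹` for a skew-adjoint `a` preserving `H`, and
`t ↦ (1 + t a) (1 - t a)⁻¹` joins `1` to `g`. In general, let `e` be the Fitting projection onto
the generalized `-1`-eigenspace of `g`. It is a polynomial in `g`, hence preserves `H`, and it is
self-adjoint. Changing the sign of `g` on the range of `e` gives `g (1 - 2e)`, which does not have
the eigenvalue `-1`, so it remains to join the involution `1 - 2e` to `1`.

For this, write the range of `e` as a direct sum of two isotropic subspaces `L`, `L'` compatibly
with `H`. The transformations acting by `s` on `L`, by `s⁻¹` on `L'` and trivially on the kernel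
of `e` form a torus in the stabilizer, and it contains `1 - 2e` as the element `s = -1`.
-/

section Polarization

variable {K V : Type*} [Field K] [AddCommGroup V] [Module K V]
  {B : V →ₗ[K] V →ₗ[K] K} {L M U : Submodule K V}

lemma isotropic_sup_span_singleton (hB : B.IsAlt) (hL : L ≤ L.orthogonalBilin B) {u : V}
    (hu : u ∈ L.orthogonalBilin B) :
    L ⊔ K ∙ u ≤ (L ⊔ K ∙ u).orthogonalBilin B := by
  intro x hx y hy
  obtain ⟨l, hl, _, hcu, rfl⟩ := Submodule.mem_sup.1 hx
  obtain ⟨l', hl', _, hdu, rfl⟩ := Submodule.mem_sup.1 hy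
  obtain ⟨c, rfl⟩ := Submodule.mem_span_singleton.1 hcu
  obtain ⟨d, rfl⟩ := Submodule.mem_span_singleton.1 hdu
  have hul : B u l = 0 := hB.isRefl _ _ (hu l hl)
  simp [hL hl l' hl', hu l' hl', hul, hB u]

variable [FiniteDimensional K V]

lemma exists_maximal_isotropic (hB : B.IsAlt) (hM : M ≤ M.orthogonalBilin B) (hMU : M ≤ U) :
    ∃ L, M ≤ L ∧ L ≤ U ∧ L ≤ L.orthogonalBilin B ∧ U ⊓ L.orthogonalBilin B ≤ L := by
  obtain ⟨L, hML, ⟨hLU, hL⟩, hmax⟩ := exists_maximal_ge_of_wellFoundedGT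
    (fun L : Submodule K V => L ≤ U ∧ L ≤ L.orthogonalBilin B) M ⟨hMU, hM⟩
  refine ⟨L, hML, hLU, hL, fun u ⟨huU, hu⟩ => ?_⟩
  have hLu : L ⊔ K ∙ u ≤ U := sup_le hLU ((Submodule.span_singleton_le_iff_mem u U).2 huU)
  exact hmax ⟨hLu, isotropic_sup_span_singleton hB hL hu⟩ le_sup_left
    (Submodule.mem_sup_right (Submodule.mem_span_singleton_self u))

lemma exists_sub_mem_orthogonalBilin (hB : B.IsRefl) (h : Disjoint M (L.orthogonalBilin B))
    (w : V) : ∃ l ∈ L, w - l ∈ M.orthogonalBilin B := by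
  let pairing : L →ₗ[K] M →ₗ[K] K := B.flip.compl₁₂ L.subtype M.subtype
  have hinj : Function.Injective pairing.flip := by
    refine (injective_iff_map_eq_zero _).2 fun m hm => ?_
    have hm' : (m : V) ∈ L.orthogonalBilin B :=
      fun l hl => hB _ _ (LinearMap.congr_fun hm ⟨l, hl⟩)
    exact Subtype.ext (Submodule.disjoint_def.1 h m m.2 hm')
  obtain ⟨l, hl⟩ := LinearMap.flip_injective_iff₁.1 hinj ((B.flip w).comp M.subtype)
  refine ⟨l, l.2, fun m hm => ?_⟩
  have hml : B m l = B m w := LinearMap.congr_fun hl ⟨m, hm⟩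
  simp [hml]

-- If `w ∈ U` were not in `L ⊔ L'`, a correction by an element of `L` would make it orthogonal to
-- `L'`, and `L'` could be enlarged.
lemma exists_isotropic_complement (hB : B.IsAlt) (hLU : L ≤ U)
    (hL : U ⊓ L.orthogonalBilin B ≤ L) (hM : M ≤ M.orthogonalBilin B) (hMU : M ≤ U)
    (hLM : Disjoint L M) :
    ∃ L', M ≤ L' ∧ L' ≤ L'.orthogonalBilin B ∧ Disjoint L L' ∧ L ⊔ L' = U := by
  obtain ⟨L', hML', ⟨hL'U, hL', hLL'⟩, hmax⟩ := exists_maximal_ge_of_wellFoundedGT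
    (fun N : Submodule K V => N ≤ U ∧ N ≤ N.orthogonalBilin B ∧ Disjoint L N) M ⟨hMU, hM, hLM⟩
  refine ⟨L', hML', hL', hLL', (sup_le hLU hL'U).antisymm fun w hw => ?_⟩
  have hdisj : Disjoint L' (L.orthogonalBilin B) :=
    Submodule.disjoint_def.2 fun x hx hxL =>
      Submodule.disjoint_def.1 hLL' x (hL ⟨hL'U hx, hxL⟩) hx
  obtain ⟨l, hl, hu⟩ := exists_sub_mem_orthogonalBilin hB.isRefl hdisj w
  by_contra hwLL'
  have hu_notMem : w - l ∉ L ⊔ L' := fun h =>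
    hwLL' (by simpa using add_mem h (Submodule.mem_sup_left hl))
  have hspan : K ∙ (w - l) ≤ U :=
    (Submodule.span_singleton_le_iff_mem _ _).2 (sub_mem hw (hLU hl))
  have hle := hmax ⟨sup_le hL'U hspan, isotropic_sup_span_singleton hB hL' hu,
    hLL'.disjoint_sup_right_of_disjoint_sup_left
      (Submodule.disjoint_span_singleton_of_notMem hu_notMem)⟩ le_sup_left
  exact hu_notMem (Submodule.mem_sup_right
    (hle (Submodule.mem_sup_right (Submodule.mem_span_singleton_self _))))

-- A maximal isotropic subspace `L₀` of `W` extends to a maximal isotropic subspace `L` of `U`.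
-- Since `W ⊓ L = L₀`, an isotropic complement `M₀` of `L₀` in `W` is disjoint from `L`, so it
-- extends to an isotropic complement of `L` in `U`.
lemma exists_polarization_of_le (hB : B.IsAlt) {W : Submodule K V} (hWU : W ≤ U) :
    ∃ L L', L ≤ L.orthogonalBilin B ∧ L' ≤ L'.orthogonalBilin B ∧ Disjoint L L' ∧ L ⊔ L' = U ∧
      W ≤ W ⊓ L ⊔ W ⊓ L' := by
  obtain ⟨L₀, -, hL₀W, hL₀, hL₀max⟩ :=
    exists_maximal_isotropic hB (M := ⊥) (U := W) bot_le bot_le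
  obtain ⟨M₀, -, hM₀, hLM₀, hsup₀⟩ :=
    exists_isotropic_complement hB hL₀W hL₀max (M := ⊥) bot_le bot_le disjoint_bot_right
  obtain ⟨L, hL₀L, hLU, hL, hLmax⟩ := exists_maximal_isotropic hB hL₀ (hL₀W.trans hWU)
  have hM₀W : M₀ ≤ W := hsup₀ ▸ le_sup_right
  have hWL : W ⊓ L ≤ L₀ := fun x ⟨hxW, hxL⟩ =>
    hL₀max ⟨hxW, Submodule.orthogonalBilin_le hL₀L (hL hxL)⟩
  have hLM₀ : Disjoint L M₀ := Submodule.disjoint_def.2 fun x hxL hxM =>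
    Submodule.disjoint_def.1 hLM₀ x (hWL ⟨hM₀W hxM, hxL⟩) hxM
  obtain ⟨L', hM₀L', hL', hLL', hsup⟩ :=
    exists_isotropic_complement hB hLU hLmax hM₀ (hM₀W.trans hWU) hLM₀
  refine ⟨L, L', hL, hL', hLL', hsup, ?_⟩
  calc W = L₀ ⊔ M₀ := hsup₀.symm
    _ ≤ W ⊓ L ⊔ W ⊓ L' := sup_le_sup (le_inf hL₀W hL₀L) (le_inf hM₀W hM₀L')

end Polarization

section Stabilizer

variable {K V : Type*} [Field K] [AddCommGroup V] [Module K V]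

/-- The invertible endomorphisms of `V` that preserve the form `B` and map `H` onto itself, that
is, the stabilizer of `H` in the isometry group of `B`. Membership unfolds to the three conditions
separately, and for degenerate `B` bijectivity is not automatic. -/
def isometryStabilizer (B : V →ₗ[K] V →ₗ[K] K) (H : Submodule K V) :
    Submonoid (End K V) where
  carrier := {g | Function.Bijective g ∧ (∀ v w, B (g v) (g w) = B v w) ∧ H.map g = H}
  one_mem' := ⟨Function.bijective_id, fun _ _ => rfl, Submodule.map_id H⟩
  mul_mem' := fun ⟨hg, hgB, hgH⟩ ⟨hh, hhB, hhH⟩ =>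
    ⟨hg.comp hh, fun v w => (hgB _ _).trans (hhB v w),
      by rw [End.mul_eq_comp, Submodule.map_comp, hhH, hgH]⟩

/-- The one-parameter family acting by `s` on the range of `p`, by `s⁻¹` on the range of `q`, and
trivially on their common kernel, when `p` and `q` are orthogonal idempotents. -/
def idempotentTorus {A : Type*} [Ring A] [Algebra K A] (p q : A) (s : K) : A :=
  1 + (s - 1) • p + (s⁻¹ - 1) • q

lemma idempotentTorus_mul_inv {A : Type*} [Ring A] [Algebra K A] {p q : A}
    (hp : IsIdempotentElem p) (hq : IsIdempotentElem q) (hpq : p * q = 0) (hqp : q * p = 0)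
    {s : K} (hs : s ≠ 0) : idempotentTorus p q s * idempotentTorus p q s⁻¹ = 1 := by
  simp only [idempotentTorus, inv_inv, mul_add, add_mul, mul_one, one_mul, smul_mul_smul_comm,
    hp.eq, hq.eq, hpq, hqp, smul_zero, add_zero]
  match_scalars <;> field_simp <;> ring

/-- `p` and `q` are the projections onto a pair of complementary isotropic subspaces of the range of
`p + q` (isotropy is encoded by `q` being the adjoint of `p`), and both preserve `H`. -/
structure IsHyperbolicSplitting (B : V →ₗ[K] V →ₗ[K] K) (H : Submodule K V) (p q : End K V) :
    Prop where
  isIdempotentElem_left : IsIdempotentElem p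
  isIdempotentElem_right : IsIdempotentElem q
  left_mul_right : p * q = 0
  right_mul_left : q * p = 0
  isAdjointPair : LinearMap.IsAdjointPair B B p q
  mem_invtSubmodule_left : H ∈ p.invtSubmodule
  mem_invtSubmodule_right : H ∈ q.invtSubmodule

variable {B : V →ₗ[K] V →ₗ[K] K} {H : Submodule K V}

lemma isAdjointPair_symm_of_isAlt (hB : B.IsAlt) {p q : End K V}
    (h : LinearMap.IsAdjointPair B B p q) : LinearMap.IsAdjointPair B B q p := fun v w => by
  rw [← hB.neg w, ← hB.neg (p w) v, h]

lemma isometry_idempotentTorus (hB : B.IsAlt) {p q : End K V} (h : IsHyperbolicSplitting B H p q)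
    {s : K} (hs : s ≠ 0) (v w : V) :
    B (idempotentTorus p q s v) (idempotentTorus p q s w) = B v w := by
  have hpq := h.isAdjointPair
  have hqp := isAdjointPair_symm_of_isAlt hB hpq
  have hadj : ∀ v w, B (idempotentTorus p q s v) w = B v (idempotentTorus p q s⁻¹ w) :=
    fun v w => by
      simp only [idempotentTorus, LinearMap.add_apply, LinearMap.smul_apply, End.one_apply,
        map_add, map_smul, hpq v w, hqp v w, inv_inv]
      ring
  have hinv := idempotentTorus_mul_inv h.isIdempotentElem_left h.isIdempotentElem_right
    h.left_mul_right h.right_mul_left (inv_ne_zero hs)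
  rw [inv_inv] at hinv
  rw [hadj, ← End.mul_apply, hinv, End.one_apply]

lemma exists_projection_of_sup_eq_range {e : End K V} (he : IsIdempotentElem e)
    {L L' : Submodule K V} (hLL' : Disjoint L L') (hsup : L ⊔ L' = LinearMap.range e) :
    ∃ p : End K V, p * e = p ∧ (∀ x ∈ L, p x = x) ∧ ∀ x ∈ L', p x = 0 := by
  have hcompl : IsCompl L (L' ⊔ LinearMap.ker e) :=
    hLL'.isCompl_sup_right_of_isCompl_sup_left
      (hsup ▸ LinearMap.IsIdempotentElem.isCompl he)
  refine ⟨L.projection _ hcompl, LinearMap.ext fun v => ?_,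
    fun x => Submodule.projection_apply_of_mem_left hcompl,
    fun x hx => Submodule.projection_apply_of_mem_right hcompl (Submodule.mem_sup_left hx)⟩
  have hker : e v - v ∈ LinearMap.ker e := by
    simp [← End.mul_apply, he.eq]
  have hzero := Submodule.projection_apply_of_mem_right hcompl
    (Submodule.mem_sup_right hker : e v - v ∈ L' ⊔ LinearMap.ker e)
  exact sub_eq_zero.1 ((map_sub _ _ _).symm.trans hzero)

lemma isAdjointPair_sub_of_isotropic {e p : End K V} (he : IsIdempotentElem e)
    (heB : B.IsSelfAdjoint e) (hep : e * p = p) (hp : ∀ v w, B (p v) (p w) = 0)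
    (hq : ∀ v w, B ((e - p) v) ((e - p) w) = 0) : LinearMap.IsAdjointPair B B p (e - p) :=
  fun v w => by
    have hpq : B (p v) ((e - p) w) = B (e v) ((e - p) w) := by
      have h := hq v w
      rw [LinearMap.sub_apply e p v, map_sub, LinearMap.sub_apply, sub_eq_zero] at h
      exact h.symm
    calc B (p v) w = B (e (p v)) w := by rw [← End.mul_apply, hep]
      _ = B (p v) ((e - p) w) := by rw [heB, LinearMap.sub_apply, map_sub, hp, sub_zero]
      _ = B (e v) ((e - p) w) := hpq
      _ = B v ((e - p) w) := by rw [heB, ← End.mul_apply, mul_sub, he.eq, hep]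

lemma exists_isHyperbolicSplitting [FiniteDimensional K V] (hB : B.IsAlt) {e : End K V}
    (he : IsIdempotentElem e) (heB : B.IsSelfAdjoint e)
    (heH : H ∈ e.invtSubmodule) :
    ∃ p q, IsHyperbolicSplitting B H p q ∧ p + q = e := by
  obtain ⟨L, L', hL, hL', hLL', hsup, hH⟩ :=
    exists_polarization_of_le hB (inf_le_right : H ⊓ LinearMap.range e ≤ LinearMap.range e)
  obtain ⟨p, hpe, hpL, hpL'⟩ := exists_projection_of_sup_eq_range he hLL' hsup
  have p_eq : ∀ {v x y}, x ∈ L → y ∈ L' → x + y = e v → p v = x := fun {v x y} hx hy hxy => by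
    rw [← hpe, End.mul_apply, ← hxy, map_add, hpL x hx, hpL' y hy, add_zero]
  have hmem : ∀ v, p v ∈ L ∧ (e - p) v ∈ L' := fun v => by
    obtain ⟨x, hx, y, hy, hxy⟩ := Submodule.mem_sup.1 (hsup.ge (LinearMap.mem_range_self e v))
    rw [LinearMap.sub_apply, ← hxy, p_eq hx hy hxy, add_sub_cancel_left]
    exact ⟨hx, hy⟩
  have hep : e * p = p := LinearMap.ext fun v =>
    (LinearMap.IsIdempotentElem.mem_range_iff he).1
      (hsup ▸ Submodule.mem_sup_left (hmem v).1)
  have hpp : p * p = p := LinearMap.ext fun v => hpL _ (hmem v).1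
  have hpH : ∀ v ∈ H, p v ∈ H := fun v hv => by
    obtain ⟨x, hx, y, hy, hxy⟩ :=
      Submodule.mem_sup.1 (hH ⟨heH hv, LinearMap.mem_range_self e v⟩)
    exact p_eq hx.2 hy.2 hxy ▸ hx.1.1
  have hadj : LinearMap.IsAdjointPair B B p (e - p) :=
    isAdjointPair_sub_of_isotropic he heB hep (fun v w => hL (hmem w).1 _ (hmem v).1)
      (fun v w => hL' (hmem w).2 _ (hmem v).2)
  exact ⟨p, e - p,
    { isIdempotentElem_left := hpp
      isIdempotentElem_right := by
        simp only [IsIdempotentElem, mul_sub, sub_mul, he.eq, hep, hpe, hpp, sub_self, sub_zero]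
      left_mul_right := by rw [mul_sub, hpe, hpp, sub_self]
      right_mul_left := by rw [sub_mul, hep, hpp, sub_self]
      isAdjointPair := hadj
      mem_invtSubmodule_left := hpH
      mem_invtSubmodule_right := fun v hv => H.sub_mem (heH hv) (hpH v hv) },
    add_sub_cancel p e⟩

lemma map_eq_of_isUnit [FiniteDimensional K V] {f : End K V} (hf : IsUnit f)
    (hfH : H ∈ f.invtSubmodule) : H.map f = H :=
  Submodule.eq_of_le_of_finrank_eq (Submodule.map_le_iff_le_comap.2 hfH)
    (Submodule.equivMapOfInjective f ((End.isUnit_iff f).1 hf).injective H).finrank_eq.symm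

lemma mem_isometryStabilizer_of_mul_eq [FiniteDimensional K V] {g x y : End K V}
    (hx : IsUnit x) (hy : IsUnit y) (hxH : H ∈ x.invtSubmodule) (hyH : H ∈ y.invtSubmodule)
    (hxy : ∀ v w, B (x v) (x w) = B (y v) (y w)) (hgx : g * x = y) :
    g ∈ isometryStabilizer B H := by
  have hgxv : ∀ v, g (x v) = y v := LinearMap.congr_fun hgx
  have hgunit : IsUnit g := by
    obtain ⟨u, rfl⟩ := hx
    rwa [← Units.isUnit_mul_units g u, hgx]
  refine ⟨(End.isUnit_iff g).1 hgunit, fun v w => ?_, ?_⟩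
  · obtain ⟨v, rfl⟩ := ((End.isUnit_iff x).1 hx).surjective v
    obtain ⟨w, rfl⟩ := ((End.isUnit_iff x).1 hx).surjective w
    rw [hgxv, hgxv, hxy]
  · calc H.map g = (H.map x).map g := by rw [map_eq_of_isUnit hx hxH]
      _ = H.map y := by rw [← Submodule.map_comp, ← End.mul_eq_comp, hgx]
      _ = H := map_eq_of_isUnit hy hyH

lemma idempotentTorus_mem_isometryStabilizer [FiniteDimensional K V] (hB : B.IsAlt)
    {p q : End K V} (h : IsHyperbolicSplitting B H p q) {s : K} (hs : s ≠ 0) :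
    idempotentTorus p q s ∈ isometryStabilizer B H := by
  have hinv := idempotentTorus_mul_inv h.isIdempotentElem_left h.isIdempotentElem_right
    h.left_mul_right h.right_mul_left hs
  refine mem_isometryStabilizer_of_mul_eq isUnit_one (IsUnit.of_mul_eq_one _ hinv)
    (fun v hv => hv) (fun v hv => ?_)
    (fun v w => (isometry_idempotentTorus hB h hs v w).symm) (mul_one _)
  exact H.add_mem (H.add_mem hv (H.smul_mem _ (h.mem_invtSubmodule_left hv)))
    (H.smul_mem _ (h.mem_invtSubmodule_right hv))

lemma cayley_mem_isometryStabilizer [FiniteDimensional K V] {g a : End K V}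
    (haB : B.IsSkewAdjoint a) (haH : H ∈ a.invtSubmodule) (hsub : IsUnit (1 - a))
    (hadd : IsUnit (1 + a)) (hga : g * (1 - a) = 1 + a) : g ∈ isometryStabilizer B H := by
  refine mem_isometryStabilizer_of_mul_eq hsub hadd (fun v hv => H.sub_mem hv (haH hv))
    (fun v hv => H.add_mem hv (haH hv)) (fun v w => ?_) hga
  have hvw : B (a v) w = - B v (a w) := by rw [haB, Pi.neg_apply, map_neg]
  simp only [LinearMap.sub_apply, LinearMap.add_apply, End.one_apply, map_sub, map_add, hvw]
  ring

lemma exists_mul_one_sub_eq_one_add {R : Type*} [Ring R] (h2 : IsUnit (2 : R)) {g : R}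
    (hg : IsUnit g) (hg1 : IsUnit (g + 1)) :
    ∃ a, a * (g + 1) = g - 1 ∧ IsUnit (1 - a) ∧ IsUnit (1 + a) ∧ g * (1 - a) = 1 + a := by
  obtain ⟨u, hu⟩ := hg1
  have hau : (g - 1) * ↑u⁻¹ * (u : R) = g - 1 := Units.inv_mul_cancel_right _ u
  set a := (g - 1) * (↑u⁻¹ : R)
  have hsub : (1 - a) * u = 2 := by
    rw [sub_mul, hau, hu, one_mul, ← one_add_one_eq_two]
    abel
  have hadd : (1 + a) * u = g * 2 := by
    rw [add_mul, hau, hu, one_mul, mul_two]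
    abel
  refine ⟨a, hu ▸ hau, ?_, ?_, ?_⟩
  · rwa [← Units.isUnit_mul_units _ u, hsub]
  · rw [← Units.isUnit_mul_units _ u, hadd]
    exact hg.mul h2
  · rw [← Units.mul_left_inj u, mul_assoc, hsub, hadd]

lemma exists_skewAdjoint_cayley [FiniteDimensional K V] [NeZero (2 : K)] {g : End K V}
    (hg : g ∈ isometryStabilizer B H) (hg1 : IsUnit (g + 1)) :
    ∃ a : End K V, B.IsSkewAdjoint a ∧ H ∈ a.invtSubmodule ∧ IsUnit (1 - a) ∧ IsUnit (1 + a) ∧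
      g * (1 - a) = 1 + a := by
  obtain ⟨hgbij, hgB, hgH⟩ := hg
  have htwo : IsUnit (2 : End K V) := by
    simpa only [map_ofNat] using (IsUnit.mk0 (2 : K) two_ne_zero).map (algebraMap K (End K V))
  obtain ⟨a, ha, hsub, hadd, hga⟩ :=
    exists_mul_one_sub_eq_one_add htwo ((End.isUnit_iff g).2 hgbij) hg1
  have ha_apply : ∀ v, a ((g + 1) v) = g v - v := LinearMap.congr_fun ha
  have hg1H : H.map (g + 1) = H := map_eq_of_isUnit hg1 fun v hv =>
    H.add_mem (hgH ▸ Submodule.mem_map_of_mem hv) hv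
  refine ⟨a, fun v w => ?_, fun v hv => ?_, hsub, hadd, hga⟩
  · obtain ⟨v, rfl⟩ := ((End.isUnit_iff _).1 hg1).surjective v
    obtain ⟨w, rfl⟩ := ((End.isUnit_iff _).1 hg1).surjective w
    rw [Pi.neg_apply, ha_apply, ha_apply]
    simp only [map_sub, map_add, map_neg, LinearMap.sub_apply, LinearMap.add_apply,
      End.one_apply, hgB]
    ring
  · obtain ⟨x, hx, rfl⟩ := hg1H.ge hv
    rw [Submodule.mem_comap, ha_apply]
    exact H.sub_mem (hgH ▸ Submodule.mem_map_of_mem hx) hx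

open Polynomial in
lemma exists_aeval_isIdempotentElem {A : Type*} [Ring A] [Algebra K A] {x : A}
    (hx : IsIntegral K x) :
    ∃ (n : ℕ) (p q : K[X]), IsIdempotentElem (aeval x p) ∧ x ^ (n + 1) * aeval x p = 0 ∧
      1 - aeval x p = x ^ (n + 1) * aeval x q := by
  obtain ⟨r, hr, hXr⟩ :=
    exists_eq_pow_rootMultiplicity_mul_and_not_dvd _ (minpoly.ne_zero hx) 0
  set n := rootMultiplicity 0 (minpoly K x)
  rw [C_0, sub_zero] at hr hXr
  obtain ⟨a, b, hab⟩ : IsCoprime (X ^ (n + 1)) r :=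
    (irreducible_X.coprime_iff_not_dvd.2 hXr).pow_left
  have hker : x ^ (n + 1) * aeval x (b * r) = 0 := by
    have h : X ^ (n + 1) * (b * r) = X * b * minpoly K x := by
      rw [hr]
      ring
    simpa using congrArg (aeval x) h
  have hcompl : 1 - aeval x (b * r) = x ^ (n + 1) * aeval x a := by
    have h : 1 - b * r = X ^ (n + 1) * a := by
      rw [← hab]
      ring
    simpa using congrArg (aeval x) h
  refine ⟨n, b * r, a, ?_, hker, hcompl⟩
  have hcomm : Commute (x ^ (n + 1)) (aeval x (b * r)) := by
    simpa using (Commute.all (X ^ (n + 1)) (b * r)).map (aeval x)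
  have hzero : aeval x (b * r) * (1 - aeval x (b * r)) = 0 := by
    rw [hcompl, ← mul_assoc, ← hcomm.eq, hker, zero_mul]
  rw [mul_sub, mul_one, sub_eq_zero] at hzero
  exact hzero.symm

-- The adjoint of `g + 1` is `(g + 1) g⁻¹`, so the kernel of `(g + 1) ^ n` is orthogonal to its
-- range.
lemma bilin_pow_add_one_eq_zero {g : End K V} (hg : ∀ v w, B (g v) (g w) = B v w) (n : ℕ) :
    ∀ v w, ((g + 1) ^ n) v = 0 → B v (((g + 1) ^ n) w) = 0 := by
  induction n with
  | zero => simp +contextual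
  | succ n ih =>
    intro v w hv
    have hcomm : Commute g ((g + 1) ^ n) :=
      ((Commute.refl g).add_right (Commute.one_right g)).pow_right n
    calc B v (((g + 1) ^ (n + 1)) w) = B ((g + 1) v) (g (((g + 1) ^ n) w)) := by
          simp only [pow_succ', End.mul_apply, LinearMap.add_apply, End.one_apply, map_add, hg]
          ring
      _ = B ((g + 1) v) (((g + 1) ^ n) (g w)) := by
          rw [← End.mul_apply, hcomm.eq, End.mul_apply]
      _ = 0 := ih _ _ (by rwa [← End.mul_apply, ← pow_succ])

lemma eq_zero_of_pow_apply_eq_zero_of_apply_eq_smul {f : End K V} {n : ℕ} {c : K} {v : V}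
    (hc : c ≠ 0) (hf : (f ^ n) v = 0) (hv : f v = c • v) : v = 0 := by
  by_contra hne
  have h := (End.hasEigenvector_iff.2 ⟨End.mem_eigenspace_iff.2 hv, hne⟩).pow_apply n
  rw [hf] at h
  exact smul_ne_zero (pow_ne_zero n hc) hne h.symm

open Polynomial in
lemma isUnit_mul_one_sub_two_smul_add_one [FiniteDimensional K V] [NeZero (2 : K)]
    {g : End K V} {n : ℕ} {p q : K[X]} (he : IsIdempotentElem (aeval (g + 1) p))
    (hker : (g + 1) ^ (n + 1) * aeval (g + 1) p = 0)
    (hcompl : 1 - aeval (g + 1) p = (g + 1) ^ (n + 1) * aeval (g + 1) q) :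
    IsUnit (g * (1 - (2 : K) • aeval (g + 1) p) + 1) := by
  have hcomm : Commute (g + 1) (aeval (g + 1) p) := by
    simpa using (Commute.all X p).map (aeval (g + 1))
  have hcomm' : Commute ((g + 1) ^ (n + 1)) (aeval (g + 1) q) := by
    simpa using (Commute.all (X ^ (n + 1)) q).map (aeval (g + 1))
  set e := aeval (g + 1) p
  refine (LinearMap.isUnit_iff_ker_eq_bot _).2 (LinearMap.ker_eq_bot'.2 fun v hv => ?_)
  have hfactor : g * (1 - (2 : K) • e) + 1 = (g + 1) * (1 - (2 : K) • e) + (2 : K) • e := by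
    rw [add_mul, one_mul]
    abel
  have hproj : e * (g * (1 - (2 : K) • e) + 1) = (2 : K) • e - (g + 1) * e := by
    have hee : e * (1 - (2 : K) • e) = -e := by
      rw [mul_sub, mul_one, mul_smul_comm, he.eq, two_smul]
      abel
    rw [hfactor, mul_add, ← mul_assoc, ← hcomm.eq, mul_assoc, hee, mul_smul_comm, he.eq, mul_neg]
    abel
  have hgev : (g + 1) (e v) = (2 : K) • e v := by
    have h := congrArg e hv
    rw [map_zero, ← End.mul_apply, hproj] at h
    exact (sub_eq_zero.1 h).symm
  have hev : e v = 0 :=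
    eq_zero_of_pow_apply_eq_zero_of_apply_eq_smul (n := n + 1) two_ne_zero
      (LinearMap.congr_fun hker v) hgev
  have hgv : (g + 1) v = 0 := by
    simpa [hfactor, hev] using hv
  calc v = (1 - e) v := by simp [hev]
    _ = aeval (g + 1) q (((g + 1) ^ n) ((g + 1) v)) := by
      rw [hcompl, hcomm'.eq, pow_succ]
      rfl
    _ = 0 := by rw [hgv, map_zero, map_zero]

lemma exists_isSelfAdjoint_isUnit_mul_add_one [FiniteDimensional K V] [NeZero (2 : K)]
    (hB : B.IsAlt) {g : End K V} (hg : g ∈ isometryStabilizer B H) :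
    ∃ e : End K V, IsIdempotentElem e ∧ B.IsSelfAdjoint e ∧ H ∈ e.invtSubmodule ∧
      IsUnit (g * (1 - (2 : K) • e) + 1) := by
  obtain ⟨n, p, q, he, hker, hcompl⟩ :=
    exists_aeval_isIdempotentElem (Algebra.IsIntegral.isIntegral (R := K) (g + 1))
  refine ⟨Polynomial.aeval (g + 1) p, he, ?_, fun v hv => ?_,
    isUnit_mul_one_sub_two_smul_add_one he hker hcompl⟩
  · set e := Polynomial.aeval (g + 1) p
    have horth : ∀ v w, B (e v) ((1 - e) w) = 0 := fun v w => by
      rw [hcompl]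
      exact bilin_pow_add_one_eq_zero hg.2.1 (n + 1) _ _ (LinearMap.congr_fun hker v)
    have hleft : ∀ v w, B (e v) w = B (e v) (e w) := fun v w => by
      simpa [sub_eq_zero] using horth v w
    intro v w
    rw [hleft, ← hB.neg (e w), ← hleft, hB.neg]
  · exact Polynomial.aeval_apply_smul_mem_of_le_comap hv p (g + 1) fun v hv =>
      H.add_mem (hg.2.2 ▸ Submodule.mem_map_of_mem hv) hv

end Stabilizer

section Topology

lemma finite_setOf_not_isUnit_one_sub_smul {K A : Type*} [Field K] [Ring A] [Algebra K A] {a : A}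
    (ha : (spectrum K a).Finite) : {t : K | ¬IsUnit (1 - t • a)}.Finite := by
  refine (ha.image Inv.inv).subset fun t ht => ⟨t⁻¹, fun hunit => ht ?_, inv_inv t⟩
  have ht0 : t ≠ 0 := by
    rintro rfl
    simp at ht
  have h : 1 - t • a = algebraMap K A t * (algebraMap K A t⁻¹ - a) := by
    rw [mul_sub, ← map_mul, mul_inv_cancel₀ ht0, map_one, Algebra.smul_def]
  rw [h]
  exact ((IsUnit.mk0 t ht0).map (algebraMap K A)).mul hunit

lemma joinedIn_of_countable_compl {X : Type*} [TopologicalSpace X] {S : Set X} {T : Set ℂ}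
    (hT : Tᶜ.Countable) {f : ℂ → X} (hf : ContinuousOn f T) (hfS : Set.MapsTo f T S) {s t : ℂ}
    (hs : s ∈ T) (ht : t ∈ T) : JoinedIn S (f s) (f t) := by
  have hpath : IsPathConnected T := by
    simpa using hT.isPathConnected_compl_of_one_lt_rank (by simp [Complex.rank_real_complex])
  exact ((hpath.image' hf).joinedIn _ ⟨s, hs, rfl⟩ _ ⟨t, ht, rfl⟩).mono hfS.image_subset

lemma joinedIn_one_idempotentTorus {A : Type*} [NormedRing A] [NormedAlgebra ℂ A] {S : Set A}
    {p q : A} (hS : ∀ s : ℂ, s ≠ 0 → idempotentTorus p q s ∈ S) :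
    JoinedIn S 1 (1 - (2 : ℂ) • (p + q)) := by
  have hcont : ContinuousOn (idempotentTorus p q : ℂ → A) {0}ᶜ := by
    unfold idempotentTorus
    have hinv : ContinuousOn (fun s : ℂ => s⁻¹) {0}ᶜ := continuousOn_inv₀
    fun_prop
  have hpath := joinedIn_of_countable_compl (by simp) hcont hS (s := 1) (t := -1) (by simp)
    (by simp)
  convert hpath using 1
  · simp [idempotentTorus]
  · simp only [idempotentTorus]
    module

lemma joinedIn_one_cayley {A : Type*} [NormedRing A] [NormedAlgebra ℂ A] [CompleteSpace A]
    {S : Set A} {g a : A} (ha : (spectrum ℂ a).Finite) (hsub : IsUnit (1 - a))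
    (hadd : IsUnit (1 + a)) (hga : g * (1 - a) = 1 + a)
    (hS : ∀ (t : ℂ) (x : A), IsUnit (1 - t • a) → IsUnit (1 + t • a) →
      x * (1 - t • a) = 1 + t • a → x ∈ S) : JoinedIn S 1 g := by
  let T : Set ℂ := {t | IsUnit (1 - t • a) ∧ IsUnit (1 + t • a)}
  have hfin := finite_setOf_not_isUnit_one_sub_smul ha
  have hT : Tᶜ.Countable := by
    refine (hfin.union (hfin.preimage neg_injective.injOn)).countable.mono fun t ht => ?_
    simpa [T, or_iff_not_imp_left] using ht
  have hcont : ContinuousOn (fun t : ℂ => (1 + t • a) * Ring.inverse (1 - t • a)) T := by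
    refine ContinuousOn.mul (by fun_prop) fun t ⟨⟨u, hu⟩, _⟩ => ?_
    have hinv : ContinuousAt Ring.inverse (1 - t • a) := hu ▸ NormedRing.inverse_continuousAt u
    exact (ContinuousAt.comp (f := fun t : ℂ => 1 - t • a) hinv (by fun_prop)).continuousWithinAt
  have hpath := joinedIn_of_countable_compl hT hcont (S := S) (fun t ⟨hsub_t, hadd_t⟩ =>
    hS t _ hsub_t hadd_t (by rw [mul_assoc, Ring.inverse_mul_cancel _ hsub_t, mul_one]))
    (s := 0) (t := 1) (by simp [T]) (by simp [T, hsub, hadd])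
  have hg : (1 + a) * Ring.inverse (1 - a) = g := by
    rw [← hga, mul_assoc, Ring.mul_inverse_cancel _ hsub, mul_one]
  simpa [hg] using hpath

lemma joinedIn_one_mul {M : Type*} [Monoid M] [TopologicalSpace M] [ContinuousMul M]
    {S : Submonoid M} {x y : M} (hx : JoinedIn (S : Set M) 1 x) (hy : JoinedIn (S : Set M) 1 y) :
    JoinedIn (S : Set M) 1 (x * y) := by
  have h := hx.mul hy
  rw [one_mul] at h
  exact h.mono (by
    rintro _ ⟨a, ha, b, hb, rfl⟩
    exact S.mul_mem ha hb)

variable {V : Type*} [NormedAddCommGroup V] [NormedSpace ℂ V]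

/-- The stabilizer of `H` in the isometry group of `B`, as a submonoid of the continuous
endomorphisms, where it has a topology. -/
noncomputable def continuousIsometryStabilizer (B : V →ₗ[ℂ] V →ₗ[ℂ] ℂ) (H : Submodule ℂ V) :
    Submonoid (V →L[ℂ] V) :=
  (isometryStabilizer B H).comap ContinuousLinearMap.toLinearMapRingHom

variable [FiniteDimensional ℂ V] {B : V →ₗ[ℂ] V →ₗ[ℂ] ℂ} {H : Submodule ℂ V}

lemma joinedIn_one_one_sub_two_smul (hB : B.IsAlt) {e : End ℂ V} (he : IsIdempotentElem e)
    (heB : B.IsSelfAdjoint e) (heH : H ∈ e.invtSubmodule) :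
    JoinedIn (continuousIsometryStabilizer B H : Set (V →L[ℂ] V)) 1
      (1 - (2 : ℂ) • End.toContinuousLinearMap V e) := by
  obtain ⟨p, q, h, rfl⟩ := exists_isHyperbolicSplitting hB he heB heH
  rw [map_add]
  exact joinedIn_one_idempotentTorus fun s hs => idempotentTorus_mem_isometryStabilizer hB h hs

lemma joinedIn_one_of_isUnit_add_one {g : End ℂ V} (hg : g ∈ isometryStabilizer B H)
    (hg1 : IsUnit (g + 1)) :
    JoinedIn (continuousIsometryStabilizer B H : Set (V →L[ℂ] V)) 1
      (End.toContinuousLinearMap V g) := by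
  obtain ⟨a, haB, haH, hsub, hadd, hga⟩ := exists_skewAdjoint_cayley hg hg1
  have : CompleteSpace V := FiniteDimensional.complete ℂ V
  let φ : End ℂ V ≃ₐ[ℂ] (V →L[ℂ] V) := End.toContinuousLinearMap V
  refine joinedIn_one_cayley (a := φ a) ?_ ?_ ?_ ?_ fun t x hsub_t hadd_t hx => ?_
  · rw [AlgEquiv.spectrum_eq]
    exact End.finite_spectrum a
  · simpa using hsub.map φ
  · simpa using hadd.map φ
  · simpa using congrArg φ hga
  · exact cayley_mem_isometryStabilizer (a := t • a)
      (fun v w => by simp [haB v w])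
      (fun v hv => H.smul_mem t (haH hv)) (hsub_t.map ContinuousLinearMap.toLinearMapRingHom)
      (hadd_t.map ContinuousLinearMap.toLinearMapRingHom)
      (congrArg ContinuousLinearMap.toLinearMapRingHom hx)

lemma joinedIn_one_of_mem_isometryStabilizer (hB : B.IsAlt) {g : V →L[ℂ] V}
    (hg : g ∈ continuousIsometryStabilizer B H) :
    JoinedIn (continuousIsometryStabilizer B H : Set (V →L[ℂ] V)) 1 g := by
  obtain ⟨e, he, heB, heH, hunit⟩ := exists_isSelfAdjoint_isUnit_mul_add_one hB hg
  set σ := 1 - (2 : ℂ) • End.toContinuousLinearMap V e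
  have hσσ : σ * σ = 1 := by
    have hφe := (he.map (End.toContinuousLinearMap V)).eq
    simp only [σ, mul_sub, sub_mul, mul_one, one_mul, smul_mul_smul_comm, hφe]
    module
  have hinvol := joinedIn_one_one_sub_two_smul hB he heB heH
  have hcayley := joinedIn_one_of_isUnit_add_one (mul_mem hg hinvol.target_mem) hunit
  have hprod := joinedIn_one_mul hcayley hinvol
  change JoinedIn _ 1 (g * σ * σ) at hprod
  rwa [mul_assoc, hσσ, mul_one] at hprod

end Topology

theorem stmt_4_general {V : Type*} [NormedAddCommGroup V] [NormedSpace ℂ V]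
    [FiniteDimensional ℂ V] (B : V →ₗ[ℂ] V →ₗ[ℂ] ℂ) (hB : B.IsAlt) (H : Submodule ℂ V) :
    IsPathConnected {g : V →L[ℂ] V |
      Function.Bijective g ∧ (∀ v w, B (g v) (g w) = B v w) ∧
      Submodule.map (g : V →ₗ[ℂ] V) H = H} :=
  ⟨1, one_mem (continuousIsometryStabilizer B H),
    fun {_} hg => joinedIn_one_of_mem_isometryStabilizer hB hg⟩

/-- Proposition 3.7(3) (`prop:orbit-symp`): for a nondegenerate skew-symmetric form, the
stabilizer in the symplectic group of any subspace `H ⊆ V` is a connected subset of the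
endomorphism space.  (The canonical topology of the finite-dimensional space `End V` is
realized here via an arbitrary norm on `V`; by finite-dimensionality all choices give the
same topology.) -/
theorem stmt_4 {V : Type*} [NormedAddCommGroup V] [NormedSpace ℂ V] [FiniteDimensional ℂ V]
    (B : V →ₗ[ℂ] V →ₗ[ℂ] ℂ)
    (hB : ∀ v, (∀ w, B v w = 0) → v = 0)
    (halt : ∀ v w, B v w = - B w v)
    (H : Submodule ℂ V) :
    IsConnected {g : V →L[ℂ] V |
      Function.Bijective g ∧ (∀ v w, B (g v) (g w) = B v w) ∧
      Submodule.map (g : V →ₗ[ℂ] V) H = H} :=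
  (stmt_4_general B (LinearMap.isAlt_iff_eq_neg_flip.2 (LinearMap.ext₂ halt)) H).isConnected
end

section
/- Assume the form ⟨−,−⟩ is symmetric (and nondegenerate), and assume n = 2k with k ≥ 1. Then there exist isotropic subspaces H₀, H₁ ⊆ V with dim H₀ = dim H₁ = k such that for every isotropic subspace H ⊆ V with dim H = k, exactly one of the following holds: there is an isometry g of V with det g = 1 and g(H₀) = H, or there is an isometry g of V with det g = 1 and g(H₁) = H. In other words, the special orthogonal group SO(V) has exactly two orbits on the set of k-dimensional isotropic subspaces of V. -/
/-!
Let `H` be a Lagrangian, i.e. an isotropic subspace of half the dimension. A section of the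
surjection `V → H*` given by the form can be corrected, by halving, to have isotropic image, so `V`
is isometric to `H* × H` with its canonical form. Hence the orthogonal group acts transitively on
Lagrangians.

Linear maps preserving a perfect pairing have inverse determinants. For the form on `V × V` this
says that isometries have determinant `±1`; for the induced pairing of `V ⧸ H` with `H` it says that
an isometry stabilizing `H` has determinant `1`. The special orthogonal group therefore has index
two and contains all stabilizers, so its orbits are represented by `H` and `r H`, where `r` is any
orthogonal reflection.
-/

open Module

open LinearMap (BilinForm)

section PerfectPairing

variable {R M N : Type*} [CommRing R] [AddCommGroup M] [Module R M] [AddCommGroup N] [Module R N]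
  [Module.Free R N] [Module.Finite R N]

theorem det_mul_det_eq_one_of_isPerfPair (p : M →ₗ[R] N →ₗ[R] R) [p.IsPerfPair]
    {f : M →ₗ[R] M} {g : N →ₗ[R] N} (h : ∀ x y, p (f x) (g y) = p x y) :
    LinearMap.det f * LinearMap.det g = 1 := by
  have hadj : g.dualMap ∘ₗ (p.toPerfPair ∘ₗ f ∘ₗ p.toPerfPair.symm) = LinearMap.id := by
    ext φ y
    simp [h]
  rw [← LinearMap.det_conj f p.toPerfPair, ← LinearMap.det_dualMap g, mul_comm,
    ← LinearMap.det_comp, hadj, LinearMap.det_id]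

end PerfectPairing

section CommRing

variable {R M : Type*} [CommRing R] [AddCommGroup M] [Module R M] {B : BilinForm R M}

section Isometry

theorem isOrthogonal_symm {g : M ≃ₗ[R] M} (hg : B.IsOrthogonal g) : B.IsOrthogonal g.symm :=
  fun v w ↦ by rw [← hg, g.apply_symm_apply, g.apply_symm_apply]

theorem isOrthogonal_trans {g h : M ≃ₗ[R] M} (hg : B.IsOrthogonal g) (hh : B.IsOrthogonal h) :
    B.IsOrthogonal (g.trans h) :=
  fun v w ↦ (hh (g v) (g w)).trans (hg v w)

variable [Module.Free R M] [Module.Finite R M]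

theorem det_eq_one_or_neg_one_of_isOrthogonal [NoZeroDivisors R] [B.IsPerfPair] {g : M →ₗ[R] M}
    (hg : B.IsOrthogonal g) : LinearMap.det g = 1 ∨ LinearMap.det g = -1 :=
  mul_self_eq_one_iff.1 (det_mul_det_eq_one_of_isPerfPair B hg)

theorem det_reflection_eq_neg_one {x : M} {f : Dual R M} (hf : f x = 2) :
    LinearMap.det (reflection hf : M →ₗ[R] M) = -1 := by
  have htransvection : (reflection hf : M →ₗ[R] M) = LinearMap.transvection (-f) x := by
    ext v
    simp [reflection_apply, LinearMap.transvection.apply, sub_eq_add_neg]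
  rw [htransvection, LinearMap.transvection.det, LinearMap.neg_apply, hf]
  norm_num

end Isometry

/-- A submodule on which a bilinear form vanishes identically. -/
def IsIsotropic (B : BilinForm R M) (H : Submodule R M) : Prop :=
  ∀ ⦃v⦄, v ∈ H → ∀ w ∈ H, B v w = 0

theorem isIsotropic_span_range {ι : Type*} {e : ι → M} (he : ∀ i j, B (e i) (e j) = 0) :
    IsIsotropic B (Submodule.span R (Set.range e)) := by
  intro v hv w hw
  induction hv, hw using Submodule.span_induction₂ with
  | mem_mem v w hv hw =>
    obtain ⟨⟨i, rfl⟩, ⟨j, rfl⟩⟩ := And.intro hv hw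
    exact he i j
  | zero_left | zero_right => simp
  | add_left _ _ _ _ _ _ h₁ h₂ | add_right _ _ _ _ _ _ h₁ h₂ => simp [h₁, h₂]
  | smul_left _ _ _ _ _ h | smul_right _ _ _ _ _ h => simp [h]

/-- The pairing of `M ⧸ H` with an isotropic submodule `H` induced by the form on `M`. -/
def IsIsotropic.quotientPairing {H : Submodule R M} (hH : IsIsotropic B H) :
    (M ⧸ H) →ₗ[R] H →ₗ[R] R :=
  H.liftQ (B.compl₂ H.subtype) fun _ hv ↦ LinearMap.ext fun w ↦ hH hv w w.2

/-- The relation of lying in the same orbit of the special orthogonal group of `B`. -/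
def SameSpecialOrbit (B : BilinForm R M) (H H' : Submodule R M) : Prop :=
  ∃ g : M ≃ₗ[R] M, B.IsOrthogonal g ∧ LinearMap.det (g : M →ₗ[R] M) = 1 ∧
    H.map (g : M →ₗ[R] M) = H'

end CommRing

section Lagrangian

variable {K V : Type*} [Field K] [AddCommGroup V] [Module K V] {B : BilinForm K V}
  {H H' : Submodule K V}

theorem exists_isOrthogonal_det_eq_neg_one [FiniteDimensional K V] [NeZero (2 : K)]
    (hB : B ≠ 0) (hsymm : B.IsSymm) :
    ∃ r : V ≃ₗ[K] V, B.IsOrthogonal r ∧ LinearMap.det (r : V →ₗ[K] V) = -1 := by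
  have : Invertible (2 : K) := invertibleOfNonzero two_ne_zero
  obtain ⟨x, hx⟩ := LinearMap.BilinForm.exists_bilinForm_self_ne_zero hB ⟨hsymm.eq⟩
  have hx_reflective : LinearMap.IsReflective B x :=
    ⟨.of_ne_zero hx, fun y ↦ (IsUnit.mk0 _ hx).dvd⟩
  exact ⟨reflection (hx_reflective.coroot_apply_self B),
    hx_reflective.isOrthogonal_reflection B ⟨hsymm.eq⟩, det_reflection_eq_neg_one _⟩

/-- A Lagrangian subspace: an isotropic subspace of half the dimension of the ambient space. -/
structure IsLagrangian (B : BilinForm K V) (H : Submodule K V) : Prop where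
  isIsotropic : IsIsotropic B H
  finrank_eq : finrank K V = 2 * finrank K H

theorem IsLagrangian.map (hH : IsLagrangian B H) {g : V ≃ₗ[K] V} (hg : B.IsOrthogonal g) :
    IsLagrangian B (H.map (g : V →ₗ[K] V)) where
  isIsotropic := by
    rintro _ ⟨v, hv, rfl⟩ _ ⟨w, hw, rfl⟩
    exact (hg v w).trans (hH.isIsotropic hv w hw)
  finrank_eq := hH.finrank_eq.trans (congrArg (2 * ·) (LinearEquiv.finrank_map_eq g H).symm)

section Stabilizer

variable [FiniteDimensional K V]

theorem surjective_compl₂_subtype (hB : B.Nondegenerate) (H : Submodule K V) :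
    Function.Surjective (B.compl₂ H.subtype) := by
  intro φ
  obtain ⟨ψ, hψ⟩ := LinearMap.exists_extend φ
  refine ⟨(B.toDual hB).symm ψ, ?_⟩
  ext h
  simpa using LinearMap.congr_fun hψ h

theorem IsLagrangian.isPerfPair_quotientPairing (hB : B.Nondegenerate) (hH : IsLagrangian B H) :
    hH.isIsotropic.quotientPairing.IsPerfPair := by
  have hsurj : Function.Surjective hH.isIsotropic.quotientPairing := fun φ ↦
    let ⟨v, hv⟩ := surjective_compl₂_subtype hB H φ
    ⟨H.mkQ v, hv⟩
  have hdim : finrank K (V ⧸ H) = finrank K (Dual K H) := by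
    have := H.finrank_quotient_add_finrank
    have := hH.finrank_eq
    rw [Subspace.dual_finrank_eq]
    lia
  exact .of_bijective _
    ⟨(LinearMap.injective_iff_surjective_of_finrank_eq_finrank hdim).2 hsurj, hsurj⟩

theorem IsLagrangian.det_eq_one_of_map_eq (hB : B.Nondegenerate) (hH : IsLagrangian B H)
    {g : V →ₗ[K] V} (hg : B.IsOrthogonal g) (hgH : H.map g = H) : LinearMap.det g = 1 := by
  have hle : H ≤ H.comap g := Submodule.map_le_iff_le_comap.1 hgH.le
  have := hH.isPerfPair_quotientPairing hB
  rw [LinearMap.det_eq_det_mul_det H g hle, mul_comm]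
  apply det_mul_det_eq_one_of_isPerfPair hH.isIsotropic.quotientPairing
  rintro ⟨v⟩ w
  exact hg v w

theorem IsLagrangian.sameSpecialOrbit_map_iff (hB : B.Nondegenerate) (hH : IsLagrangian B H)
    {g : V ≃ₗ[K] V} (hg : B.IsOrthogonal g) :
    SameSpecialOrbit B H (H.map (g : V →ₗ[K] V)) ↔ LinearMap.det (g : V →ₗ[K] V) = 1 := by
  refine ⟨fun ⟨s, hs, hs_det, hsH⟩ ↦ ?_, fun hg_det ↦ ⟨g, hg, hg_det, rfl⟩⟩
  have hstab : H.map (g.trans s.symm : V →ₗ[K] V) = H := by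
    rw [LinearEquiv.coe_trans, Submodule.map_comp, ← hsH, ← Submodule.map_comp,
      LinearEquiv.symm_comp, Submodule.map_id]
  have hdet := hH.det_eq_one_of_map_eq hB (isOrthogonal_trans hg (isOrthogonal_symm hs)) hstab
  have hs_inv := LinearEquiv.det_symm_mul_det s
  rw [hs_det, mul_one] at hs_inv
  rwa [LinearEquiv.coe_trans, LinearMap.det_comp, hs_inv, one_mul] at hdet

end Stabilizer

section Transitivity

variable [FiniteDimensional K V] [NeZero (2 : K)]

theorem IsIsotropic.exists_isotropic_section (hB : B.Nondegenerate) (hsymm : B.IsSymm)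
    (hH : IsIsotropic B H) :
    ∃ s : Dual K H →ₗ[K] V, (∀ φ (h : H), B (s φ) h = φ h) ∧ ∀ φ ψ, B (s φ) (s ψ) = 0 := by
  obtain ⟨t, ht⟩ := (B.compl₂ H.subtype).exists_rightInverse_of_surjective
    (LinearMap.range_eq_top.2 (surjective_compl₂_subtype hB H))
  have ht (φ : Dual K H) (h : H) : B (t φ) h = φ h :=
    LinearMap.congr_fun (LinearMap.congr_fun ht φ) h
  -- The Gram form of `t`, turned into a map to `H` by reflexivity.
  let c : Dual K H →ₗ[K] H := (evalEquiv K H).symm ∘ₗ B.compl₁₂ t t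
  have hc (φ ψ : Dual K H) : ψ (c φ) = B (t φ) (t ψ) := by
    simp [c]
  refine ⟨t - (2⁻¹ : K) • H.subtype ∘ₗ c, fun φ h ↦ ?_, fun φ ψ ↦ ?_⟩
  · simp [ht, hH (c φ).2 h h.2]
  · have hcross : B (c φ) (t ψ) = B (t φ) (t ψ) := by rw [hsymm.eq, ht, hc]
    have hhalf : B (t φ) (t ψ) - 2⁻¹ * B (t φ) (t ψ) - 2⁻¹ * B (t φ) (t ψ) = 0 := by
      field_simp
      ring
    simpa [hc, hcross, ht, hH (c φ).2 _ (c ψ).2, hsymm.eq (t ψ) (t φ)] using hhalf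

theorem IsLagrangian.exists_equiv_dualProd (hB : B.Nondegenerate) (hsymm : B.IsSymm)
    (hH : IsLagrangian B H) :
    ∃ e : (Dual K H × H) ≃ₗ[K] V,
      (∀ x y, B (e x) (e y) = LinearMap.dualProd K H x y) ∧ ∀ h : H, e (0, h) = h := by
  obtain ⟨s, hs, hs_isotropic⟩ := hH.isIsotropic.exists_isotropic_section hB hsymm
  let f : (Dual K H × H) →ₗ[K] V := s.coprod H.subtype
  have hf (x y : Dual K H × H) : B (f x) (f y) = LinearMap.dualProd K H x y := by
    have hcross : B x.2 (s y.1) = y.1 x.2 := by rw [hsymm.eq, hs]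
    simp [f, hcross, hs, hs_isotropic, hH.isIsotropic x.2.2 _ y.2.2, add_comm]
  have hf_inj : Function.Injective f := by
    rw [injective_iff_map_eq_zero]
    intro x hx
    apply (LinearMap.separatingLeft_dualProd K H).2 (Module.eval_apply_injective K)
    intro y
    rw [← hf, hx, map_zero, LinearMap.zero_apply]
  have hdim : finrank K (Dual K H × H) = finrank K V := by
    rw [finrank_prod, Subspace.dual_finrank_eq, hH.finrank_eq, two_mul]
  exact ⟨LinearEquiv.ofInjectiveOfFinrankEq f hf_inj hdim, hf, fun h ↦ (by simp [f] : f (0, h) = h)⟩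

theorem IsLagrangian.exists_isOrthogonal_map_eq (hB : B.Nondegenerate) (hsymm : B.IsSymm)
    (hH : IsLagrangian B H) (hH' : IsLagrangian B H') :
    ∃ g : V ≃ₗ[K] V, B.IsOrthogonal g ∧ H.map (g : V →ₗ[K] V) = H' := by
  obtain ⟨e, he, he_inr⟩ := hH.exists_equiv_dualProd hB hsymm
  obtain ⟨e', he', he'_inr⟩ := hH'.exists_equiv_dualProd hB hsymm
  have hdim : finrank K H = finrank K H' := by
    have := hH.finrank_eq
    have := hH'.finrank_eq
    lia
  let σ : H ≃ₗ[K] H' := LinearEquiv.ofFinrankEq H H' hdim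
  let g : V ≃ₗ[K] V := e.symm.trans ((σ.dualMap.symm.prodCongr σ).trans e')
  have hg : B.IsOrthogonal g := fun v w ↦ by
    obtain ⟨x, rfl⟩ := e.surjective v
    obtain ⟨y, rfl⟩ := e.surjective w
    simp [g, he, he']
  have hgH (h : H) : g h = σ h := by
    rw [← he_inr h]
    simp [g, he'_inr]
  have hle : H.map (g : V →ₗ[K] V) ≤ H' := by
    rintro _ ⟨h, hh, rfl⟩
    exact (hgH ⟨h, hh⟩).symm ▸ (σ ⟨h, hh⟩).2
  exact ⟨g, hg, Submodule.eq_of_le_of_finrank_eq hle ((LinearEquiv.finrank_map_eq g H).trans hdim)⟩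

end Transitivity

section Existence

theorem exists_isLagrangian_of_iIsOrtho {ι : Type*} [Finite ι] (hB : B.Nondegenerate)
    (hsq : ∀ a : K, IsSquare a) (v : Basis (ι ⊕ ι) K V) (hv : B.iIsOrtho v) :
    ∃ H : Submodule K V, IsLagrangian B H := by
  classical
  have := Fintype.ofFinite ι
  have hv_ne := hv.not_isOrtho_basis_self_of_nondegenerate hB
  have hroot (j : ι) : ∃ t : K,
      B (v (.inl j)) (v (.inl j)) + t * t * B (v (.inr j)) (v (.inr j)) = 0 := by
    obtain ⟨t, ht⟩ := hsq (-B (v (.inl j)) (v (.inl j)) / B (v (.inr j)) (v (.inr j)))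
    exact ⟨t, by rw [← ht, div_mul_cancel₀ _ (hv_ne (.inr j)), add_neg_cancel]⟩
  choose t ht using hroot
  let e (j : ι) : V := v (.inl j) + t j • v (.inr j)
  have hortho {i j : ι ⊕ ι} (hij : i ≠ j) : B (v i) (v j) = 0 := hv hij
  have he (i j : ι) : B (e i) (e j) = 0 := by
    obtain rfl | hij := eq_or_ne i j
    · simpa [e, hortho, mul_assoc] using ht i
    · simp [e, hortho, hij]
  have he_li : LinearIndependent K e := by
    rw [Fintype.linearIndependent_iff]
    intro a ha i
    simpa [e, Finsupp.single_apply] using congrArg (v.coord (.inl i)) ha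
  refine ⟨Submodule.span K (Set.range e), isIsotropic_span_range he, ?_⟩
  rw [finrank_span_eq_card he_li, finrank_eq_card_basis v, Fintype.card_sum, two_mul]

theorem exists_isLagrangian [FiniteDimensional K V] [NeZero (2 : K)] (hB : B.Nondegenerate)
    (hsymm : B.IsSymm) (hsq : ∀ a : K, IsSquare a) (hV : Even (finrank K V)) :
    ∃ H : Submodule K V, IsLagrangian B H := by
  have : Invertible (2 : K) := invertibleOfNonzero two_ne_zero
  obtain ⟨v, hv⟩ := LinearMap.BilinForm.exists_orthogonal_basis (B := B) ⟨hsymm.eq⟩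
  obtain ⟨k, hk⟩ := hV
  let σ : Fin (finrank K V) ≃ Fin k ⊕ Fin k := (finCongr hk).trans finSumFinEquiv.symm
  refine exists_isLagrangian_of_iIsOrtho hB hsq (v.reindex σ) fun i j hij ↦ ?_
  rw [Basis.coe_reindex]
  exact hv (σ.symm.injective.ne hij)

end Existence

section SpecialOrbits

variable [FiniteDimensional K V] [NeZero (2 : K)]

theorem IsLagrangian.exists_xor_sameSpecialOrbit [Nontrivial V] (hB : B.Nondegenerate)
    (hsymm : B.IsSymm) {H₀ : Submodule K V} (hH₀ : IsLagrangian B H₀) :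
    ∃ H₁ : Submodule K V, IsLagrangian B H₁ ∧ ∀ H : Submodule K V, IsLagrangian B H →
      Xor (SameSpecialOrbit B H₀ H) (SameSpecialOrbit B H₁ H) := by
  obtain ⟨r, hr, hr_det⟩ := exists_isOrthogonal_det_eq_neg_one hB.ne_zero hsymm
  have hH₁ := hH₀.map hr
  refine ⟨H₀.map (r : V →ₗ[K] V), hH₁, fun H hH ↦ ?_⟩
  obtain ⟨g, hg, rfl⟩ := hH₀.exists_isOrthogonal_map_eq hB hsymm hH
  have hH₀_iff := hH₀.sameSpecialOrbit_map_iff hB hg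
  have hH₁_iff := hH₁.sameSpecialOrbit_map_iff hB (isOrthogonal_trans (isOrthogonal_symm hr) hg)
  have hmap : (H₀.map (r : V →ₗ[K] V)).map (r.symm.trans g : V →ₗ[K] V) =
      H₀.map (g : V →ₗ[K] V) := by
    rw [← Submodule.map_comp, LinearEquiv.coe_trans, LinearMap.comp_assoc, LinearEquiv.symm_comp,
      LinearMap.comp_id]
  have hdet : LinearMap.det (r.symm.trans g : V →ₗ[K] V) = -LinearMap.det (g : V →ₗ[K] V) := by
    have hr_inv := LinearEquiv.det_symm_mul_det r
    rw [hr_det] at hr_inv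
    rw [LinearEquiv.coe_trans, LinearMap.det_comp]
    linear_combination -LinearMap.det (g : V →ₗ[K] V) * hr_inv
  rw [hmap, hdet] at hH₁_iff
  rw [hH₀_iff, hH₁_iff]
  have : B.IsPerfPair := .of_bijective B (B.toDual hB).bijective
  have hne : (-1 : K) ≠ 1 := fun h ↦ two_ne_zero (α := K) (by linear_combination -h)
  obtain h | h := det_eq_one_or_neg_one_of_isOrthogonal (g := g.toLinearMap) hg <;>
    simp [h, hne, Xor]

theorem stmt_6_general (hsq : ∀ a : K, IsSquare a) {k : ℕ} (hV : finrank K V = 2 * k)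
    (hk : 1 ≤ k) (hB : ∀ v, (∀ w, B v w = 0) → v = 0) (hsymm : ∀ v w, B v w = B w v) :
    ∃ H₀ H₁ : Submodule K V, IsIsotropic B H₀ ∧ IsIsotropic B H₁ ∧
      finrank K H₀ = k ∧ finrank K H₁ = k ∧
      ∀ H : Submodule K V, IsIsotropic B H → finrank K H = k →
        Xor (SameSpecialOrbit B H₀ H) (SameSpecialOrbit B H₁ H) := by
  have : Nontrivial V := nontrivial_of_finrank_pos (R := K) (by lia)
  have hB_symm : B.IsSymm := ⟨hsymm⟩
  have hB_nondeg : B.Nondegenerate := hB_symm.isRefl.nondegenerate_iff_separatingLeft.2 hB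
  have finrank_eq {H : Submodule K V} (hH : IsLagrangian B H) : finrank K H = k := by
    have := hH.finrank_eq
    lia
  obtain ⟨H₀, hH₀⟩ := exists_isLagrangian hB_nondeg hB_symm hsq (even_iff_two_dvd.2 ⟨k, hV⟩)
  obtain ⟨H₁, hH₁, hxor⟩ := hH₀.exists_xor_sameSpecialOrbit hB_nondeg hB_symm
  exact ⟨H₀, H₁, hH₀.isIsotropic, hH₁.isIsotropic, finrank_eq hH₀, finrank_eq hH₁,
    fun H hH hHk ↦ hxor H ⟨hH, hHk ▸ hV⟩⟩

end SpecialOrbits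

end Lagrangian

/-- Proposition 3.9(2) (`prop:orbit-orth`), the case `n = 2k`: for a nondegenerate symmetric
form on a space of dimension `n = 2k` with `k ≥ 1`, the special orthogonal group has exactly
two orbits on the set of `k`-dimensional isotropic subspaces. -/
theorem stmt_6 {V : Type*} [AddCommGroup V] [Module ℂ V] [FiniteDimensional ℂ V]
    (n k : ℕ) (hn : finrank ℂ V = n) (hnk : n = 2 * k) (hk : 1 ≤ k)
    (B : V →ₗ[ℂ] V →ₗ[ℂ] ℂ)
    (hB : ∀ v, (∀ w, B v w = 0) → v = 0)
    (hsymm : ∀ v w, B v w = B w v) :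
    ∃ H₀ H₁ : Submodule ℂ V,
      H₀ ≤ bperp B H₀ ∧ H₁ ≤ bperp B H₁ ∧
      finrank ℂ H₀ = k ∧ finrank ℂ H₁ = k ∧
      ∀ H : Submodule ℂ V, H ≤ bperp B H → finrank ℂ H = k →
        Xor'
          (∃ g : V ≃ₗ[ℂ] V, (∀ v w, B (g v) (g w) = B v w) ∧
            LinearMap.det (g : V →ₗ[ℂ] V) = 1 ∧ Submodule.map (g : V →ₗ[ℂ] V) H₀ = H)
          (∃ g : V ≃ₗ[ℂ] V, (∀ v w, B (g v) (g w) = B v w) ∧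
            LinearMap.det (g : V →ₗ[ℂ] V) = 1 ∧ Submodule.map (g : V →ₗ[ℂ] V) H₁ = H) :=
  stmt_6_general (fun a ↦ IsAlgClosed.exists_eq_mul_self a) (hn.trans hnk) hk hB hsymm
end
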